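/- Let (Ω, 𝒜, μ) be a measure space, let w₀, …, w_m : Ω → [0, 1] be measurable weight functions, let c₀, …, c_m ∈ L²(μ) with ‖cᵢ‖_{L²(μ)} ≤ R, and define ℓᵢ(s) = ∫ wᵢ |s − cᵢ|² dμ for s ∈ L²(μ). Let S ⊆ {s ∈ L²(μ) : ‖s‖_{L²(μ)} ≤ R} and let T ⊆ S satisfy: for every s ∈ S there exists t ∈ T with ‖s − t‖_{L²(μ)} ≤ ν. Then for every λ ∈ ℝ₊ᵐ and b ∈ ℝᵐ, writing L(s, λ) = ℓ₀(s) + Σᵢ λᵢ (ℓᵢ(s) − bᵢ), one has 0 ≤ inf_{t ∈ T} L(t, λ) − inf_{s ∈ S} L(s, λ) ≤ 4R(1 + ‖λ‖₁)ν. -/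

import Mathlib

open MeasureTheory

open scoped ENNReal NNReal

/-!
Since `|‖u‖² - ‖v‖²| ≤ ‖u - v‖ (‖u‖ + ‖v‖)` pointwise, Hölder's inequality makes every loss
`ℓᵢ` Lipschitz with constant `4R` on the ball of radius `R`, so the Lagrangian is Lipschitz there
with constant `4R(1 + ‖λ‖₁)`. Replacing a point of `S` by a `ν`-close point of `T`
therefore raises the Lagrangian by at most `4R(1 + ‖λ‖₁)ν`.
-/

section InfimumOverNet

variable {X : Type*} [PseudoMetricSpace X] {K ε : ℝ≥0} {f : X → ℝ} {S T : Set X}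

theorem bddBelow_image_of_lipschitzOnWith (hf : LipschitzOnWith K f S)
    (hS : Bornology.IsBounded S) : BddBelow (f '' S) := by
  obtain ⟨g, hg, hfg⟩ := hf.extend_real
  rw [hfg.image_eq]
  exact (hg.isBounded_image hS).bddBelow

theorem sInf_image_sub_sInf_image_mem_Icc_of_isCover (hf : LipschitzOnWith K f S)
    (hbdd : BddBelow (f '' S)) (hTS : T ⊆ S) (hT : Metric.IsCover ε S T) :
    sInf (f '' T) - sInf (f '' S) ∈ Set.Icc 0 (K * ε : ℝ) := by
  rcases S.eq_empty_or_nonempty with rfl | hS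
  · simpa [Set.subset_empty_iff.1 hTS] using (K * ε).coe_nonneg
  have himage : f '' T ⊆ f '' S := Set.image_mono hTS
  refine ⟨sub_nonneg.2 (csInf_le_csInf hbdd ((hT.nonempty hS).image f) himage), ?_⟩
  suffices sInf (f '' T) - K * ε ≤ sInf (f '' S) by linarith
  refine le_csInf (hS.image f) (Set.forall_mem_image.2 fun s hs ↦ ?_)
  obtain ⟨t, ht, hst⟩ := hT hs
  have hdist : dist t s ≤ ε := by
    rw [dist_comm, ← coe_nndist, NNReal.coe_le_coe, ← edist_le_coe]
    exact hst
  rw [sub_le_iff_le_add]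
  calc sInf (f '' T) ≤ f t := csInf_le (hbdd.mono himage) (Set.mem_image_of_mem f ht)
    _ ≤ f s + K * dist t s := hf.le_add_mul (hTS ht) hs
    _ ≤ f s + K * ε := by gcongr

end InfimumOverNet

section Lagrangian

variable {X ι : Type*} [Fintype ι]

/-- The Lagrangian `L(x, l) = f₀(x) + ∑ i, lᵢ (fᵢ(x) - bᵢ)` of the objective `f₀` under the
constraints `fᵢ ≤ bᵢ`, with multipliers `l`. -/
def lagrangian (f₀ : X → ℝ) (f : ι → X → ℝ) (l b : ι → ℝ) (x : X) : ℝ :=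
  f₀ x + ∑ i, l i * (f i x - b i)

theorem lipschitzOnWith_lagrangian [PseudoMetricSpace X] {K : ℝ≥0} {S : Set X} {f₀ : X → ℝ}
    {f : ι → X → ℝ} (hf₀ : LipschitzOnWith K f₀ S) (hf : ∀ i, LipschitzOnWith K (f i) S)
    (l b : ι → ℝ) : LipschitzOnWith (K * (1 + ∑ i, ‖l i‖₊)) (lagrangian f₀ f l b) S := by
  have hsum : LipschitzOnWith (K * ∑ i, ‖l i‖₊) (fun x ↦ ∑ i, l i * (f i x - b i)) S := by
    refine LipschitzOnWith.of_dist_le_mul fun x hx y hy ↦ ?_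
    calc dist (∑ i, l i * (f i x - b i)) (∑ i, l i * (f i y - b i))
        ≤ ∑ i, dist (l i * (f i x - b i)) (l i * (f i y - b i)) := dist_sum_sum_le _ _ _
      _ = ∑ i, ‖l i‖ * dist (f i x) (f i y) := by
        simp only [Real.dist_eq, ← mul_sub, abs_mul, sub_sub_sub_cancel_right, Real.norm_eq_abs]
      _ ≤ ∑ i, ‖l i‖ * (K * dist x y) := by
        gcongr with i
        exact (hf i).dist_le_mul x hx y hy
      _ = (K * ∑ i, ‖l i‖₊ : ℝ≥0) * dist x y := by
        push_cast
        rw [← Finset.sum_mul]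
        ring
  rw [mul_add, mul_one]
  exact hf₀.add hsum

end Lagrangian

section WeightedLoss

theorem abs_norm_sq_sub_norm_sq_le {E : Type*} [SeminormedAddCommGroup E] (u v : E) :
    |‖u‖ ^ 2 - ‖v‖ ^ 2| ≤ ‖u - v‖ * (‖u‖ + ‖v‖) := by
  rw [sq_sub_sq, abs_mul, abs_of_nonneg (by positivity), mul_comm]
  gcongr
  exact abs_norm_sub_norm_le u v

variable {Ω E F : Type*} [MeasurableSpace Ω] {μ : Measure Ω} [NormedAddCommGroup E]
  [NormedAddCommGroup F]

theorem integrable_norm_mul_norm {p q : ℝ≥0∞} [ENNReal.HolderTriple p q 1] (f : Lp E p μ)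
    (g : Lp F q μ) : Integrable (fun x ↦ ‖f x‖ * ‖g x‖) μ :=
  (Lp.memLp f).norm.integrable_mul (Lp.memLp g).norm

theorem integral_norm_mul_norm_le {p q : ℝ≥0∞} [ENNReal.HolderTriple p q 1] (f : Lp E p μ)
    (g : Lp F q μ) : ∫ x, ‖f x‖ * ‖g x‖ ∂μ ≤ ‖f‖ * ‖g‖ := by
  have hf := (Lp.memLp f).norm
  have hg := (Lp.memLp g).norm
  have hholder : eLpNorm ((‖f ·‖) • (‖g ·‖)) 1 μ ≤ eLpNorm f p μ * eLpNorm g q μ := by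
    simpa only [eLpNorm_norm] using eLpNorm_smul_le_mul_eLpNorm hg.1 hf.1 (p := p) (q := q)
  calc ∫ x, ‖f x‖ * ‖g x‖ ∂μ = (eLpNorm ((‖f ·‖) • (‖g ·‖)) 1 μ).toReal := by
        rw [toReal_eLpNorm (hf.1.smul hg.1), lpNorm_one_eq_integral_norm (hf.1.smul hg.1)]
        simp
    _ ≤ (eLpNorm f p μ * eLpNorm g q μ).toReal :=
        ENNReal.toReal_mono (ENNReal.mul_ne_top (Lp.eLpNorm_ne_top f) (Lp.eLpNorm_ne_top g))
          hholder
    _ = ‖f‖ * ‖g‖ := by rw [ENNReal.toReal_mul, Lp.norm_def, Lp.norm_def]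

/-- The weighted quadratic loss `ℓ(s) = ∫ w ‖s - c‖² dμ` with weight `w` and centre `c`. -/
noncomputable def weightedLoss (μ : Measure Ω) (w : Ω → ℝ) (c s : Lp E 2 μ) : ℝ :=
  ∫ x, w x * ‖s x - c x‖ ^ 2 ∂μ

variable {w : Ω → ℝ} (hwm : AEStronglyMeasurable w μ) (hw : ∀ᵐ x ∂μ, ‖w x‖ ≤ 1)

include hwm hw

theorem integrable_mul_norm_sub_sq (c s : Lp E 2 μ) :
    Integrable (fun x ↦ w x * ‖s x - c x‖ ^ 2) μ :=
  (((Lp.memLp s).sub (Lp.memLp c)).integrable_norm_pow two_ne_zero).bdd_mul hwm hw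

theorem dist_weightedLoss_le (c s t : Lp E 2 μ) :
    dist (weightedLoss μ w c s) (weightedLoss μ w c t) ≤ ‖s - t‖ * (‖s - c‖ + ‖t - c‖) := by
  have hint := integrable_mul_norm_sub_sq hwm hw c
  have hs := integrable_norm_mul_norm (s - t) (s - c)
  have ht := integrable_norm_mul_norm (s - t) (t - c)
  have hpointwise : ∀ᵐ x ∂μ, ‖w x * ‖s x - c x‖ ^ 2 - w x * ‖t x - c x‖ ^ 2‖
      ≤ ‖(s - t) x‖ * ‖(s - c) x‖ + ‖(s - t) x‖ * ‖(t - c) x‖ := by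
    filter_upwards [hw, Lp.coeFn_sub s t, Lp.coeFn_sub s c, Lp.coeFn_sub t c]
      with x hwx hst hsc htc
    simp only [hst, hsc, htc, Pi.sub_apply]
    calc ‖w x * ‖s x - c x‖ ^ 2 - w x * ‖t x - c x‖ ^ 2‖
        = ‖w x‖ * |‖s x - c x‖ ^ 2 - ‖t x - c x‖ ^ 2| := by
          rw [← mul_sub, norm_mul, Real.norm_eq_abs (_ - _)]
      _ ≤ 1 * (‖s x - c x - (t x - c x)‖ * (‖s x - c x‖ + ‖t x - c x‖)) :=
          mul_le_mul hwx (abs_norm_sq_sub_norm_sq_le _ _) (abs_nonneg _) zero_le_one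
      _ = ‖s x - t x‖ * ‖s x - c x‖ + ‖s x - t x‖ * ‖t x - c x‖ := by
          rw [one_mul, sub_sub_sub_cancel_right, mul_add]
  calc dist (weightedLoss μ w c s) (weightedLoss μ w c t)
      = ‖∫ x, (w x * ‖s x - c x‖ ^ 2 - w x * ‖t x - c x‖ ^ 2) ∂μ‖ := by
        rw [integral_sub (hint s) (hint t), dist_eq_norm, weightedLoss, weightedLoss]
    _ ≤ ∫ x, (‖(s - t) x‖ * ‖(s - c) x‖ + ‖(s - t) x‖ * ‖(t - c) x‖) ∂μ :=
        norm_integral_le_of_norm_le (hs.add ht) hpointwise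
    _ ≤ ‖s - t‖ * ‖s - c‖ + ‖s - t‖ * ‖t - c‖ := by
        rw [integral_add hs ht]
        exact add_le_add (integral_norm_mul_norm_le _ _) (integral_norm_mul_norm_le _ _)
    _ = ‖s - t‖ * (‖s - c‖ + ‖t - c‖) := (mul_add _ _ _).symm

theorem lipschitzOnWith_weightedLoss {R : ℝ≥0} {c : Lp E 2 μ} (hc : ‖c‖ ≤ R) :
    LipschitzOnWith (4 * R) (weightedLoss μ w c) (Metric.closedBall 0 R) := by
  refine LipschitzOnWith.of_dist_le_mul fun s hs t ht ↦ ?_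
  rw [mem_closedBall_zero_iff] at hs ht
  have hsum : ‖s - c‖ + ‖t - c‖ ≤ 4 * R := by
    linarith [norm_sub_le s c, norm_sub_le t c]
  calc dist (weightedLoss μ w c s) (weightedLoss μ w c t)
      ≤ ‖s - t‖ * (‖s - c‖ + ‖t - c‖) := dist_weightedLoss_le hwm hw c s t
    _ ≤ ‖s - t‖ * (4 * R) := by gcongr
    _ = (4 * R : ℝ≥0) * dist s t := by
        rw [mul_comm, dist_eq_norm]
        norm_cast

end WeightedLoss

theorem stmt16_general {Ω E ι : Type*} [MeasurableSpace Ω] {μ : Measure Ω}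
    [NormedAddCommGroup E] [Fintype ι] {w₀ : Ω → ℝ} {w : ι → Ω → ℝ}
    (hw₀m : AEStronglyMeasurable w₀ μ) (hwm : ∀ i, AEStronglyMeasurable (w i) μ)
    (hw₀ : ∀ᵐ x ∂μ, ‖w₀ x‖ ≤ 1) (hw : ∀ i, ∀ᵐ x ∂μ, ‖w i x‖ ≤ 1)
    {R ν : ℝ} (hν : 0 ≤ ν) {c₀ : Lp E 2 μ} {c : ι → Lp E 2 μ}
    (hc₀ : ‖c₀‖ ≤ R) (hc : ∀ i, ‖c i‖ ≤ R)
    {S T : Set (Lp E 2 μ)} (hS : ∀ s ∈ S, ‖s‖ ≤ R) (hTS : T ⊆ S)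
    (happrox : ∀ s ∈ S, ∃ t ∈ T, ‖s - t‖ ≤ ν) (l b : ι → ℝ) :
    let L := lagrangian (weightedLoss μ w₀ c₀) (fun i ↦ weightedLoss μ (w i) (c i)) l b
    sInf (L '' T) - sInf (L '' S) ∈ Set.Icc 0 (4 * R * (1 + ∑ i, |l i|) * ν) := by
  intro L
  lift R to ℝ≥0 using (norm_nonneg c₀).trans hc₀
  lift ν to ℝ≥0 using hν
  have hball : S ⊆ Metric.closedBall 0 R := fun s hs ↦ mem_closedBall_zero_iff.2 (hS s hs)
  have hL : LipschitzOnWith (4 * R * (1 + ∑ i, ‖l i‖₊)) L S :=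
    (lipschitzOnWith_lagrangian (lipschitzOnWith_weightedLoss hw₀m hw₀ hc₀)
      (fun i ↦ lipschitzOnWith_weightedLoss (hwm i) (hw i) (hc i)) l b).mono hball
  have hcover : Metric.IsCover ν S T := Metric.isCover_iff_subset_iUnion_closedBall.2 fun s hs ↦ by
    simpa only [Set.mem_iUnion₂, mem_closedBall_iff_norm, exists_prop] using happrox s hs
  have hbdd := bddBelow_image_of_lipschitzOnWith hL (Metric.isBounded_closedBall.subset hball)
  simpa using sInf_image_sub_sInf_image_mem_Icc_of_isCover hL hbdd hTS hcover

/-- parametrization gap in `L²`: with weighted quadratic losses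
`ℓᵢ(s) = ∫ wᵢ |s − cᵢ|² dμ` on `L²(μ)`, `‖cᵢ‖ ≤ R`, a set `S` contained in the ball of
radius `R` and a `ν`-dense subset `T ⊆ S`, for every `λ ≥ 0` and `b` the Lagrangian
`L(s, λ) = ℓ₀(s) + ∑ i, λᵢ (ℓᵢ(s) − bᵢ)` satisfies
`0 ≤ inf_{t ∈ T} L(t, λ) − inf_{s ∈ S} L(s, λ) ≤ 4R(1 + ‖λ‖₁)ν`. -/
theorem stmt16 {Ω : Type*} [MeasurableSpace Ω] (μ : Measure Ω) {m : ℕ}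
    (w0 : Ω → ℝ) (w : Fin m → Ω → ℝ)
    (hw0m : Measurable w0) (hwm : ∀ i, Measurable (w i))
    (hw0 : ∀ x, w0 x ∈ Set.Icc (0 : ℝ) 1) (hw : ∀ i, ∀ x, w i x ∈ Set.Icc (0 : ℝ) 1)
    (R ν : ℝ) (hν : 0 ≤ ν)
    (c0 : Lp ℝ 2 μ) (c : Fin m → Lp ℝ 2 μ)
    (hc0 : ‖c0‖ ≤ R) (hc : ∀ i, ‖c i‖ ≤ R)
    (S T : Set (Lp ℝ 2 μ)) (hS : ∀ s ∈ S, ‖s‖ ≤ R) (hTS : T ⊆ S)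
    (happrox : ∀ s ∈ S, ∃ t ∈ T, ‖s - t‖ ≤ ν)
    (l : Fin m → ℝ) (hl : ∀ i, 0 ≤ l i) (b : Fin m → ℝ) :
    0 ≤ sInf ((fun t : Lp ℝ 2 μ =>
          (∫ x, w0 x * (t x - c0 x) ^ 2 ∂μ)
            + ∑ i, l i * ((∫ x, w i x * (t x - c i x) ^ 2 ∂μ) - b i)) '' T)
        - sInf ((fun s : Lp ℝ 2 μ =>
          (∫ x, w0 x * (s x - c0 x) ^ 2 ∂μ)
            + ∑ i, l i * ((∫ x, w i x * (s x - c i x) ^ 2 ∂μ) - b i)) '' S) ∧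
    sInf ((fun t : Lp ℝ 2 μ =>
          (∫ x, w0 x * (t x - c0 x) ^ 2 ∂μ)
            + ∑ i, l i * ((∫ x, w i x * (t x - c i x) ^ 2 ∂μ) - b i)) '' T)
        - sInf ((fun s : Lp ℝ 2 μ =>
          (∫ x, w0 x * (s x - c0 x) ^ 2 ∂μ)
            + ∑ i, l i * ((∫ x, w i x * (s x - c i x) ^ 2 ∂μ) - b i)) '' S)
      ≤ 4 * R * (1 + ∑ i, |l i|) * ν := by
  simp only [← sq_abs (_ - _)]
  exact stmt16_general hw0m.aestronglyMeasurable (fun i ↦ (hwm i).aestronglyMeasurable)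
    (.of_forall fun x ↦ (Real.norm_of_nonneg (hw0 x).1).trans_le (hw0 x).2)
    (fun i ↦ .of_forall fun x ↦ (Real.norm_of_nonneg (hw i x).1).trans_le (hw i x).2)
    hν hc0 hc hS hTS happrox l b
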